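/- arXiv:1602.04398 — 2 statements merged into one kernel-verified Lean document; each statement's English description precedes it below -/
import Mathlib

section
/- Under the model assumptions, writing ā = U^T a and b̄ = V^T b for a single sample (a, b, y), the following hold: E[ā y b̄^T] = Q; E‖ā y b̄^T − Q‖_F² ≤ r² σ²_{y|a,b} + σ²; E[|y|²] ≤ σ²_{y|a,b} + τ0²; E‖ā y‖₂² ≤ r σ²_{y|a,b} + τ1²; and E‖b̄ y‖₂² ≤ r σ²_{y|a,b} + τ2². -/
/-!
Write `y = f(ā, b̄) + e` with `m = σ(a, b)`. The conditional mean hypothesis says `E[e | m] = 0`, and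
the variance hypothesis says `E[e² | m] ≤ σ²_{y|a,b}`. For any weight `ψ(ā, b̄)` and constant `c`,
`ψ y - c = ψ e + (ψ f - c)`, whose cross term has mean zero, so
`E (ψ y - c)² ≤ σ²_{y|a,b} E ψ² + E (ψ f - c)²` (`noise_decomp`). The four bounds are the cases
`ψ = āⱼ b̄ₖ, c = Qⱼₖ`; `ψ = 1, c = 0`; `ψ = āⱼ, c = 0`; `ψ = b̄ₖ, c = 0`, summed over the indices;
each of these weights has `E ψ² = 1`. The identity `E[ā y b̄ᵀ] = Q` is `E[āⱼ b̄ₖ e] = 0`.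

Two points need an argument. The weights are unbounded, so even the integrability of `ψ² e²` has to be
derived: the conditional variance bound is the inequality `e² dμ ≤ σ²_{y|a,b} dμ` between measures on
`m`, which integrates every nonnegative `m`-measurable function (`lintegral_weight_le`). And
`(ā, b̄)` has law `N(0, I_r) ⊗ N(0, I_r)`, by comparing characteristic functions and using
`UᵀU = VᵀV = 1` (`map_stdGauss`).
-/

open MeasureTheory ProbabilityTheory Matrix Real

/-- The standard Gaussian distribution `N(0, I_n)` on `ℝ^n`. -/
noncomputable def stdGaussian (n : ℕ) : Measure (Fin n → ℝ) :=
  Measure.pi fun _ => gaussianReal 0 1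

/-- The joint law of a pair of independent `N(0, I_r)` vectors `(ā, b̄)`. -/
noncomputable def stdGaussianPair (r : ℕ) : Measure ((Fin r → ℝ) × (Fin r → ℝ)) :=
  (stdGaussian r).prod (stdGaussian r)

/-- The Frobenius norm of a real matrix. -/
noncomputable def frobNorm {n1 n2 : ℕ} (M : Matrix (Fin n1) (Fin n2) ℝ) : ℝ :=
  Real.sqrt (∑ i, ∑ j, (M i j) ^ 2)

/-- The Euclidean (ℓ²) norm of a vector in `ℝ^n`. -/
noncomputable def l2norm {n : ℕ} (v : Fin n → ℝ) : ℝ :=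
  Real.sqrt (∑ i, (v i) ^ 2)

/-! ### Standard Gaussian vectors -/

/-- The characteristic function of `N(0, I_n)`, in terms of the coordinates of the functional `L`. -/
theorem charFunDual_stdGauss (n : ℕ) (L : StrongDual ℝ (Fin n → ℝ)) :
    charFunDual (_root_.stdGaussian n) L
      = Complex.exp (-((∑ i, (L (Pi.single i 1)) ^ 2 : ℝ) : ℂ) / 2) := by
  have h1 : ∀ M : StrongDual ℝ ℝ, charFunDual (gaussianReal 0 1) M
      = Complex.exp (-((M 1 : ℝ) : ℂ) ^ 2 / 2) := by
    intro M
    have h : charFunDual (gaussianReal 0 1) M = charFun (gaussianReal 0 1) (M 1) := by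
      rw [charFunDual_apply, charFun_apply_real]
      congr 1
      ext x
      have hx : M x = x * M 1 := by
        conv_lhs => rw [← mul_one x, ← smul_eq_mul, map_smul, smul_eq_mul]
      rw [hx]
      push_cast
      ring_nf
    rw [h, charFun_gaussianReal]
    congr 1
    simp
    ring
  rw [_root_.stdGaussian, charFunDual_pi]
  simp_rw [h1, ← Complex.exp_sum]
  congr 1
  push_cast
  rw [← Finset.sum_div, ← Finset.sum_neg_distrib]
  rfl

instance stdGauss_isProb (n : ℕ) : IsProbabilityMeasure (_root_.stdGaussian n) := by
  unfold _root_.stdGaussian; infer_instance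

/-- `Uᵀ` sends `N(0, I_n)` to `N(0, I_r)` when `U` has orthonormal columns: on characteristic
functions this is `‖U l‖² = ‖l‖²`. -/
theorem map_stdGauss {n r : ℕ} (U : Matrix (Fin n) (Fin r) ℝ) (hU : Uᵀ * U = 1) :
    (_root_.stdGaussian n).map (fun x => Uᵀ *ᵥ x) = _root_.stdGaussian r := by
  let T : (Fin n → ℝ) →L[ℝ] (Fin r → ℝ) := LinearMap.toContinuousLinearMap (Matrix.mulVecLin Uᵀ)
  have hT : (fun x => Uᵀ *ᵥ x) = T := by
    ext x : 1
    exact (Matrix.mulVecLin_apply Uᵀ x).symm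
  rw [hT]
  have : IsProbabilityMeasure ((_root_.stdGaussian n).map T) :=
    Measure.isProbabilityMeasure_map T.continuous.measurable.aemeasurable
  refine Measure.ext_of_charFunDual <| funext fun L => ?_
  rw [charFunDual_map, charFunDual_stdGauss, charFunDual_stdGauss]
  congr 4
  -- `l` is the coordinate vector of the functional `L`.
  set l : Fin r → ℝ := fun j => L (Pi.single j 1) with hl
  have hL : ∀ v, L v = v ⬝ᵥ l := by
    intro v
    conv_lhs => rw [pi_eq_sum_univ' v]
    rw [map_sum]
    simp only [map_smul, smul_eq_mul, dotProduct, hl]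
  have h1 : ∀ i, (L.comp T) (Pi.single i 1) = (U *ᵥ l) i := by
    intro i
    rw [ContinuousLinearMap.comp_apply, hL, ← hT]
    change (Uᵀ *ᵥ Pi.single i 1) ⬝ᵥ l = _
    rw [Matrix.mulVec_single_one]
    rfl
  simp_rw [h1]
  have h2 : (U *ᵥ l) ⬝ᵥ (U *ᵥ l) = l ⬝ᵥ l := by
    rw [Matrix.dotProduct_mulVec, Matrix.vecMul_mulVec, hU]
    simp
  simpa [dotProduct, pow_two] using h2

theorem stdGauss_coord (n : ℕ) (j : Fin n) :
    Integrable (fun x : Fin n → ℝ => x j ^ 2) (_root_.stdGaussian n) ∧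
      ∫ x, x j ^ 2 ∂(_root_.stdGaussian n) = 1 := by
  have hmp : MeasurePreserving (Function.eval j) (_root_.stdGaussian n) (gaussianReal 0 1) :=
    measurePreserving_eval (fun _ : Fin n => gaussianReal 0 1) j
  have hint : Integrable (fun x : ℝ => x ^ 2) (gaussianReal 0 1) :=
    (memLp_id_gaussianReal (μ := 0) (v := 1) 2).integrable_sq
  have hval : ∫ x : ℝ, x ^ 2 ∂(gaussianReal 0 1) = 1 := by
    have h := variance_id_gaussianReal (μ := 0) (v := 1)
    rw [variance_eq_integral aemeasurable_id] at h
    simpa [integral_id_gaussianReal] using h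
  refine ⟨hmp.integrable_comp_of_integrable hint, ?_⟩
  rw [← hval, ← hmp.map_eq, integral_map hmp.measurable.aemeasurable (by fun_prop)]

instance stdGaussPair_isProb (r : ℕ) : IsProbabilityMeasure (stdGaussianPair r) := by
  unfold stdGaussianPair; infer_instance

theorem stdGaussPair_fst (r : ℕ) (j : Fin r) :
    Integrable (fun p : (Fin r → ℝ) × (Fin r → ℝ) => p.1 j ^ 2) (stdGaussianPair r) ∧
      ∫ p, p.1 j ^ 2 ∂(stdGaussianPair r) = 1 := by
  obtain ⟨h1, h2⟩ := stdGauss_coord r j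
  refine ⟨h1.comp_fst _, ?_⟩
  rw [← h2, stdGaussianPair]
  simpa using integral_fun_fst (μ := _root_.stdGaussian r) (ν := _root_.stdGaussian r)
    (fun x : Fin r → ℝ => x j ^ 2)

theorem stdGaussPair_snd (r : ℕ) (k : Fin r) :
    Integrable (fun p : (Fin r → ℝ) × (Fin r → ℝ) => p.2 k ^ 2) (stdGaussianPair r) ∧
      ∫ p, p.2 k ^ 2 ∂(stdGaussianPair r) = 1 := by
  obtain ⟨h1, h2⟩ := stdGauss_coord r k
  refine ⟨h1.comp_snd _, ?_⟩
  rw [← h2, stdGaussianPair]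
  simpa using integral_fun_snd (μ := _root_.stdGaussian r) (ν := _root_.stdGaussian r)
    (fun x : Fin r → ℝ => x k ^ 2)

theorem stdGaussPair_mul (r : ℕ) (j k : Fin r) :
    Integrable (fun p : (Fin r → ℝ) × (Fin r → ℝ) => (p.1 j * p.2 k) ^ 2) (stdGaussianPair r) ∧
      ∫ p, (p.1 j * p.2 k) ^ 2 ∂(stdGaussianPair r) = 1 := by
  obtain ⟨h1, h2⟩ := stdGauss_coord r j
  obtain ⟨h3, h4⟩ := stdGauss_coord r k
  simp_rw [mul_pow]
  refine ⟨h1.mul_prod h3, ?_⟩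
  rw [stdGaussianPair, integral_prod_mul (fun x : Fin r → ℝ => x j ^ 2)
    (fun x : Fin r → ℝ => x k ^ 2), h2, h4, mul_one]

/-! ### Conditionally centred noise -/

section CondMoments

variable {Ω : Type*} {m mΩ : MeasurableSpace Ω} {μ : Measure Ω} [IsProbabilityMeasure μ]

/-- A bound `E[Z | m] ≤ c` integrates against every nonnegative `m`-measurable weight, with no
boundedness of the weight: it says that `Z dμ ≤ c dμ` as measures on `m`. -/
theorem lintegral_weight_le (hm : m ≤ mΩ) {Z : Ω → ℝ} (hZm : Measurable Z) (hZ : Integrable Z μ)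
    (hZ0 : 0 ≤ Z) {c : ℝ} (hc : 0 ≤ c) (hcond : ∀ᵐ ω ∂μ, (μ[Z | m]) ω ≤ c)
    {u : Ω → ENNReal} (hu : Measurable[m] u) :
    ∫⁻ ω, ENNReal.ofReal (Z ω) * u ω ∂μ ≤ ENNReal.ofReal c * ∫⁻ ω, u ω ∂μ := by
  have hle : (μ.withDensity fun ω => ENNReal.ofReal (Z ω)).trim hm
      ≤ ENNReal.ofReal c • μ.trim hm := by
    refine Measure.le_iff.2 fun s hs => ?_
    rw [trim_measurableSet_eq hm hs, Measure.smul_apply, trim_measurableSet_eq hm hs,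
      withDensity_apply _ (hm s hs),
      ← ofReal_integral_eq_lintegral_ofReal hZ.integrableOn (ae_of_all _ hZ0),
      ← setIntegral_condExp hm hZ hs, smul_eq_mul, ← ofReal_measureReal,
      ← ENNReal.ofReal_mul hc]
    refine ENNReal.ofReal_le_ofReal ?_
    calc ∫ ω in s, (μ[Z | m]) ω ∂μ ≤ ∫ _ in s, c ∂μ :=
          setIntegral_mono_ae integrable_condExp.integrableOn (integrable_const c).integrableOn hcond
      _ = c * μ.real s := by simp [mul_comm]
  calc ∫⁻ ω, ENNReal.ofReal (Z ω) * u ω ∂μ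
      = ∫⁻ ω, u ω ∂(μ.withDensity fun ω => ENNReal.ofReal (Z ω)) :=
        (lintegral_withDensity_eq_lintegral_mul μ hZm.ennreal_ofReal (hu.mono hm le_rfl)).symm
    _ = ∫⁻ ω, u ω ∂((μ.withDensity fun ω => ENNReal.ofReal (Z ω)).trim hm) :=
        (lintegral_trim hm hu).symm
    _ ≤ ∫⁻ ω, u ω ∂(ENNReal.ofReal c • μ.trim hm) := lintegral_mono' hle le_rfl
    _ = ENNReal.ofReal c * ∫⁻ ω, u ω ∂μ := by
        rw [lintegral_smul_measure, lintegral_trim hm hu, smul_eq_mul]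

/-- The Bochner form of `lintegral_weight_le`; integrability of `Z u` is part of the conclusion. -/
theorem integral_weight_le (hm : m ≤ mΩ) {Z : Ω → ℝ} (hZm : Measurable Z) (hZ : Integrable Z μ)
    (hZ0 : 0 ≤ Z) {c : ℝ} (hc : 0 ≤ c) (hcond : ∀ᵐ ω ∂μ, (μ[Z | m]) ω ≤ c)
    {u : Ω → ℝ} (hu : Measurable[m] u) (hui : Integrable u μ) (hu0 : 0 ≤ u) :
    Integrable (fun ω => Z ω * u ω) μ ∧ ∫ ω, Z ω * u ω ∂μ ≤ c * ∫ ω, u ω ∂μ := by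
  have hum : Measurable u := hu.mono hm le_rfl
  have h := lintegral_weight_le hm hZm hZ hZ0 hc hcond hu.ennreal_ofReal
  simp_rw [← ENNReal.ofReal_mul (hZ0 _)] at h
  rw [← ofReal_integral_eq_lintegral_ofReal hui (ae_of_all _ hu0), ← ENNReal.ofReal_mul hc] at h
  have hpos : 0 ≤ fun ω => Z ω * u ω := fun ω => mul_nonneg (hZ0 ω) (hu0 ω)
  have hint : Integrable (fun ω => Z ω * u ω) μ := by
    refine ⟨(hZm.mul hum).aestronglyMeasurable, ?_⟩
    rw [hasFiniteIntegral_iff_ofReal (ae_of_all _ hpos)]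
    exact h.trans_lt ENNReal.ofReal_lt_top
  refine ⟨hint, ?_⟩
  rw [← ofReal_integral_eq_lintegral_ofReal hint (ae_of_all _ hpos)] at h
  exact (ENNReal.ofReal_le_ofReal_iff (mul_nonneg hc (integral_nonneg hu0))).1 h

theorem integral_mul_eq_zero_of_condExp (hm : m ≤ mΩ) {e w : Ω → ℝ} (he : Integrable e μ)
    (he0 : μ[e | m] =ᵐ[μ] 0) (hw : Measurable[m] w) (hwe : Integrable (fun ω => w ω * e ω) μ) :
    ∫ ω, w ω * e ω ∂μ = 0 := by
  have h := condExp_mul_of_stronglyMeasurable_left (μ := μ) (m := m) hw.stronglyMeasurable hwe he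
  have h2 : ∫ ω, (μ[w * e | m]) ω ∂μ = ∫ ω, w ω * e ω ∂μ := integral_condExp hm
  rw [← h2]
  refine integral_eq_zero_of_ae ?_
  filter_upwards [h, he0] with ω h1 h3
  rw [h1, Pi.mul_apply, h3]
  simp

/-- The conditional bias-variance inequality: for a conditionally centred noise `e` with
conditional variance at most `c`, and `m`-measurable `w`, `q` in `L²`, the cross term of
`(w e + q)²` integrates to zero. -/
theorem noise_decomp (hm : m ≤ mΩ) {e w q : Ω → ℝ} (hem : Measurable e) (he : Integrable e μ)
    (he2 : Integrable (fun ω => e ω ^ 2) μ) (he0 : μ[e | m] =ᵐ[μ] 0) {c : ℝ} (hc : 0 ≤ c)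
    (hcond : ∀ᵐ ω ∂μ, (μ[fun ω => e ω ^ 2 | m]) ω ≤ c)
    (hw : Measurable[m] w) (hw2 : Integrable (fun ω => w ω ^ 2) μ)
    (hq : Measurable[m] q) (hq2 : Integrable (fun ω => q ω ^ 2) μ) :
    Integrable (fun ω => (w ω * e ω + q ω) ^ 2) μ ∧
      ∫ ω, (w ω * e ω + q ω) ^ 2 ∂μ ≤ c * ∫ ω, w ω ^ 2 ∂μ + ∫ ω, q ω ^ 2 ∂μ := by
  have hwm : Measurable w := hw.mono hm le_rfl
  have hqm : Measurable q := hq.mono hm le_rfl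
  obtain ⟨h1, h2⟩ := integral_weight_le hm (hem.pow_const 2) he2 (fun ω => sq_nonneg _) hc hcond
    (hw.pow_const 2) hw2 (fun ω => sq_nonneg _)
  have hsq : (fun ω => e ω ^ 2 * w ω ^ 2) = fun ω => (w ω * e ω) ^ 2 := by
    ext ω; ring
  rw [hsq] at h1 h2
  have hL1 : MemLp (fun ω => w ω * e ω) 2 μ :=
    (memLp_two_iff_integrable_sq (hwm.mul hem).aestronglyMeasurable).2 h1
  have hL2 : MemLp q 2 μ := (memLp_two_iff_integrable_sq hqm.aestronglyMeasurable).2 hq2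
  have hcross : Integrable (fun ω => (q ω * w ω) * e ω) μ := by
    have := hL2.integrable_mul hL1
    refine this.congr (ae_of_all _ fun ω => ?_)
    simp only [Pi.mul_apply]
    ring
  have hzero := integral_mul_eq_zero_of_condExp hm he he0 (hq.mul hw) hcross
  have hexp : (fun ω => (w ω * e ω + q ω) ^ 2)
      = fun ω => ((w ω * e ω) ^ 2 + 2 * ((q ω * w ω) * e ω)) + q ω ^ 2 := by
    ext ω; ring
  refine ⟨(hL1.add hL2).integrable_sq, ?_⟩
  have h12 : Integrable (fun ω => (w ω * e ω) ^ 2 + 2 * ((q ω * w ω) * e ω)) μ :=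
    h1.add (hcross.const_mul 2)
  rw [hexp, integral_add h12 hq2, integral_add h1 (hcross.const_mul 2),
    integral_const_mul]
  have hzero' : ∫ ω, (q ω * w ω) * e ω ∂μ = 0 := hzero
  rw [hzero']
  linarith

end CondMoments

/-! ### Sums of squares -/

theorem frobNorm_sq {n1 n2 : ℕ} (M : Matrix (Fin n1) (Fin n2) ℝ) :
    frobNorm M ^ 2 = ∑ i, ∑ j, (M i j) ^ 2 :=
  Real.sq_sqrt (Finset.sum_nonneg fun _ _ => Finset.sum_nonneg fun _ _ => sq_nonneg _)

theorem l2norm_sq {n : ℕ} (v : Fin n → ℝ) : l2norm v ^ 2 = ∑ i, (v i) ^ 2 :=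
  Real.sq_sqrt (Finset.sum_nonneg fun _ _ => sq_nonneg _)

/-- If a finite sum of squares of measurable functions is integrable, so is each square. -/
theorem integrable_sq_of_sum {α ι : Type*} [MeasurableSpace α] {ν : Measure α} (s : Finset ι)
    {F : ι → α → ℝ} (hF : ∀ i, Measurable (F i))
    (h : Integrable (fun x => ∑ i ∈ s, F i x ^ 2) ν) {i : ι} (hi : i ∈ s) :
    Integrable (fun x => F i x ^ 2) ν := by
  refine h.mono' ((hF i).pow_const 2).aestronglyMeasurable (ae_of_all _ fun x => ?_)
  rw [Real.norm_of_nonneg (sq_nonneg _)]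
  exact Finset.single_le_sum (f := fun i => F i x ^ 2) (fun i _ => sq_nonneg _) hi

/-- Termwise bounds `E[X i] ≤ c + E[Y i]` add up over a finite index type. -/
theorem integral_sum_le {Ω α ι : Type*} [Fintype ι] [MeasurableSpace Ω] [MeasurableSpace α]
    {μ : Measure Ω} {ν : Measure α} {X : ι → Ω → ℝ} {Y : ι → α → ℝ} {c : ℝ}
    (hX : ∀ i, Integrable (X i) μ ∧ ∫ ω, X i ω ∂μ ≤ c + ∫ p, Y i p ∂ν)
    (hY : ∀ i, Integrable (Y i) ν) :
    ∫ ω, ∑ i, X i ω ∂μ ≤ (Fintype.card ι : ℝ) * c + ∫ p, ∑ i, Y i p ∂ν := by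
  rw [integral_finsetSum _ fun i _ => (hX i).1, integral_finsetSum _ fun i _ => hY i]
  calc ∑ i, ∫ ω, X i ω ∂μ ≤ ∑ i, (c + ∫ p, Y i p ∂ν) := Finset.sum_le_sum fun i _ => (hX i).2
    _ = (Fintype.card ι : ℝ) * c + ∑ i, ∫ p, Y i p ∂ν := by simp [Finset.sum_add_distrib]

/-! ### The moment bounds -/

/-- The moment identities and bounds for any pair `(A, B)` of independent standard Gaussian vectors
that is measurable for the conditioning σ-algebra `m`. Here `A` and `B` stand for `Uᵀ a` and `Vᵀ b`,
and `m` for the σ-algebra generated by `(a, b)`. -/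
theorem moments_of_gaussian_pair {Ω : Type*} {m mΩ : MeasurableSpace Ω} (hm : m ≤ mΩ)
    {μ : Measure Ω} [IsProbabilityMeasure μ] {r : ℕ} (A B : Ω → Fin r → ℝ) (y : Ω → ℝ)
    (hy : Measurable y)
    (hGm : Measurable[m] fun ω => (A ω, B ω))
    (hG : MeasurePreserving (fun ω => (A ω, B ω)) μ (stdGaussianPair r))
    (f : (Fin r → ℝ) → (Fin r → ℝ) → ℝ) (hf : Measurable (Function.uncurry f))
    (hy_int : Integrable y μ)
    (hmean : μ[y | m] =ᵐ[μ] fun ω => f (A ω) (B ω))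
    (σy2 : ℝ) (hσy2 : 0 ≤ σy2)
    (hvar_int : Integrable (fun ω => (y ω - f (A ω) (B ω)) ^ 2) μ)
    (hvar : ∀ᵐ ω ∂μ, (μ[(fun ω' => (y ω' - f (A ω') (B ω')) ^ 2) | m]) ω ≤ σy2)
    (Q : Matrix (Fin r) (Fin r) ℝ)
    (hQ : ∀ j k, Q j k = ∫ p, p.1 j * f p.1 p.2 * p.2 k ∂(stdGaussianPair r))
    (hQ_int : ∀ j k, Integrable (fun p => p.1 j * f p.1 p.2 * p.2 k) (stdGaussianPair r))
    (σ2 τ0sq τ1sq τ2sq : ℝ)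
    (hσ2 : σ2 = ∫ p,
      frobNorm ((Matrix.of fun j k => p.1 j * f p.1 p.2 * p.2 k) - Q) ^ 2 ∂(stdGaussianPair r))
    (hσ2_int : Integrable
      (fun p => frobNorm ((Matrix.of fun j k => p.1 j * f p.1 p.2 * p.2 k) - Q) ^ 2)
      (stdGaussianPair r))
    (hτ0 : τ0sq = ∫ p, (f p.1 p.2) ^ 2 ∂(stdGaussianPair r))
    (hτ0_int : Integrable (fun p => (f p.1 p.2) ^ 2) (stdGaussianPair r))
    (hτ1 : τ1sq = ∫ p, l2norm (fun j => p.1 j * f p.1 p.2) ^ 2 ∂(stdGaussianPair r))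
    (hτ1_int : Integrable (fun p => l2norm (fun j => p.1 j * f p.1 p.2) ^ 2) (stdGaussianPair r))
    (hτ2 : τ2sq = ∫ p, l2norm (fun k => p.2 k * f p.1 p.2) ^ 2 ∂(stdGaussianPair r))
    (hτ2_int : Integrable (fun p => l2norm (fun k => p.2 k * f p.1 p.2) ^ 2) (stdGaussianPair r)) :
    (∀ j k, ∫ ω, A ω j * y ω * B ω k ∂μ = Q j k) ∧
    (∫ ω, frobNorm ((Matrix.of fun j k => A ω j * y ω * B ω k) - Q) ^ 2 ∂μ
      ≤ (r : ℝ) ^ 2 * σy2 + σ2) ∧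
    (∫ ω, (y ω) ^ 2 ∂μ ≤ σy2 + τ0sq) ∧
    (∫ ω, l2norm (fun j => A ω j * y ω) ^ 2 ∂μ ≤ (r : ℝ) * σy2 + τ1sq) ∧
    (∫ ω, l2norm (fun k => B ω k * y ω) ^ 2 ∂μ ≤ (r : ℝ) * σy2 + τ2sq) := by
  set G : Ω → (Fin r → ℝ) × (Fin r → ℝ) := fun ω => (A ω, B ω) with hG_def
  have hfm : Measurable fun p : (Fin r → ℝ) × (Fin r → ℝ) => f p.1 p.2 := hf
  have hcoe : ∀ h : (Fin r → ℝ) × (Fin r → ℝ) → ℝ, Measurable h →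
      ∫ ω, h (G ω) ∂μ = ∫ p, h p ∂(stdGaussianPair r) := fun h hh => by
    rw [← hG.map_eq, integral_map hG.measurable.aemeasurable hh.aestronglyMeasurable]
  have hfint : Integrable (fun ω => f (G ω).1 (G ω).2) μ :=
    integrable_condExp.congr hmean
  set e : Ω → ℝ := fun ω => y ω - f (G ω).1 (G ω).2 with he_def
  have hem : Measurable e := hy.sub (hfm.comp hG.measurable)
  have he : Integrable e μ := hy_int.sub hfint
  have he0 : μ[e | m] =ᵐ[μ] 0 := by
    have h1 : μ[e | m] =ᵐ[μ] μ[y | m] - μ[fun ω => f (G ω).1 (G ω).2 | m] :=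
      condExp_sub hy_int hfint m
    have h2 : μ[fun ω => f (G ω).1 (G ω).2 | m] = fun ω => f (G ω).1 (G ω).2 :=
      condExp_of_stronglyMeasurable (f := fun ω => f (G ω).1 (G ω).2) hm
        (hfm.comp hGm).stronglyMeasurable hfint
    filter_upwards [h1, hmean] with ω h3 h4
    rw [h3, Pi.sub_apply, h2, h4]
    simp [hG_def]
  -- `noise_decomp` for `ψ y - c = ψ e + (ψ f - c)`, with the right-hand side moved to the Gaussian law.
  have key : ∀ (ψ : (Fin r → ℝ) × (Fin r → ℝ) → ℝ) (c : ℝ), Measurable ψ →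
      Integrable (fun p => ψ p ^ 2) (stdGaussianPair r) →
      Integrable (fun p => (ψ p * f p.1 p.2 - c) ^ 2) (stdGaussianPair r) →
      Integrable (fun ω => (ψ (G ω) * y ω - c) ^ 2) μ ∧
        ∫ ω, (ψ (G ω) * y ω - c) ^ 2 ∂μ ≤ σy2 * ∫ p, ψ p ^ 2 ∂(stdGaussianPair r)
          + ∫ p, (ψ p * f p.1 p.2 - c) ^ 2 ∂(stdGaussianPair r) := by
    intro ψ c hψ hψ2 hψf
    have hqm : Measurable fun p : (Fin r → ℝ) × (Fin r → ℝ) => ψ p * f p.1 p.2 - c :=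
      (hψ.mul hfm).sub_const c
    have h := noise_decomp hm (w := fun ω => ψ (G ω))
      (q := fun ω => ψ (G ω) * f (G ω).1 (G ω).2 - c) hem he hvar_int he0 hσy2 hvar
      (hψ.comp hGm) (hG.integrable_comp_of_integrable hψ2)
      (hqm.comp hGm) (hG.integrable_comp_of_integrable hψf)
    rw [hcoe (fun p => ψ p ^ 2) (hψ.pow_const 2),
      hcoe (fun p => (ψ p * f p.1 p.2 - c) ^ 2) (hqm.pow_const 2)] at h
    have heq : (fun ω => (ψ (G ω) * y ω - c) ^ 2)
        = fun ω => (ψ (G ω) * e ω + (ψ (G ω) * f (G ω).1 (G ω).2 - c)) ^ 2 := by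
      ext ω
      simp only [he_def]
      ring
    rw [heq]
    exact h
  have hm1 : ∀ j, Measurable fun p : (Fin r → ℝ) × (Fin r → ℝ) => p.1 j := fun j => by fun_prop
  have hm2 : ∀ k, Measurable fun p : (Fin r → ℝ) × (Fin r → ℝ) => p.2 k := fun k => by fun_prop
  refine ⟨fun j k => ?_, ?_, ?_, ?_, ?_⟩
  · have hψ : Measurable fun p : (Fin r → ℝ) × (Fin r → ℝ) => p.1 j * p.2 k := (hm1 j).mul (hm2 k)
    have hw2 := hG.integrable_comp_of_integrable (stdGaussPair_mul r j k).1
    -- `noise_decomp` with `q = 0` puts `āⱼ b̄ₖ e` in `L²`.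
    have hwe : Integrable (fun ω => ((G ω).1 j * (G ω).2 k) * e ω) μ := by
      have h := (noise_decomp hm (w := fun ω => (G ω).1 j * (G ω).2 k) (q := fun _ => 0)
        hem he hvar_int he0 hσy2 hvar (hψ.comp hGm) hw2 measurable_const (by simp)).1
      simp only [add_zero] at h
      exact ((memLp_two_iff_integrable_sq
        ((hψ.comp hG.measurable).mul hem).aestronglyMeasurable).2 h).integrable one_le_two
    have hzero := integral_mul_eq_zero_of_condExp hm he he0 (hψ.comp hGm) hwe
    have hwf : Integrable (fun ω => (G ω).1 j * f (G ω).1 (G ω).2 * (G ω).2 k) μ :=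
      hG.integrable_comp_of_integrable (hQ_int j k)
    have heq : (fun ω => A ω j * y ω * B ω k)
        = fun ω => ((G ω).1 j * (G ω).2 k) * e ω
          + (G ω).1 j * f (G ω).1 (G ω).2 * (G ω).2 k := by
      ext ω
      simp only [he_def, hG_def]
      ring
    rw [heq, integral_add hwe hwf, hQ,
      hcoe (fun p => p.1 j * f p.1 p.2 * p.2 k) (((hm1 j).mul hfm).mul (hm2 k))]
    simpa using hzero
  · simp only [frobNorm_sq, Matrix.sub_apply, Matrix.of_apply] at hσ2 hσ2_int ⊢
    have hF : ∀ j k, Measurable fun p : (Fin r → ℝ) × (Fin r → ℝ) =>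
        p.1 j * f p.1 p.2 * p.2 k - Q j k := fun j k =>
      (((hm1 j).mul hfm).mul (hm2 k)).sub_const _
    have hint : ∀ j k, Integrable (fun p => (p.1 j * f p.1 p.2 * p.2 k - Q j k) ^ 2)
        (stdGaussianPair r) := fun j k => by
      refine integrable_sq_of_sum Finset.univ (i := (j, k))
        (F := fun (i : Fin r × Fin r) (p : (Fin r → ℝ) × (Fin r → ℝ)) =>
          p.1 i.1 * f p.1 p.2 * p.2 i.2 - Q i.1 i.2)
        (fun i => hF i.1 i.2) ?_ (Finset.mem_univ _)
      simp only [Fintype.sum_prod_type]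
      exact hσ2_int
    have hk : ∀ j k, Integrable (fun ω => (A ω j * y ω * B ω k - Q j k) ^ 2) μ ∧
        ∫ ω, (A ω j * y ω * B ω k - Q j k) ^ 2 ∂μ
          ≤ σy2 + ∫ p, (p.1 j * f p.1 p.2 * p.2 k - Q j k) ^ 2 ∂(stdGaussianPair r) := by
      intro j k
      have h := key (fun p => p.1 j * p.2 k) (Q j k) ((hm1 j).mul (hm2 k))
        (stdGaussPair_mul r j k).1 (by
          convert hint j k using 4
          ring)
      rw [(stdGaussPair_mul r j k).2, mul_one] at h
      simp only [hG_def, mul_right_comm _ ((B _) k), mul_right_comm _ (_ : ℝ) (f _ _)] at h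
      exact h
    have h := integral_sum_le (ι := Fin r × Fin r) (fun i => hk i.1 i.2) (fun i => hint i.1 i.2)
    simp only [Fintype.sum_prod_type, Fintype.card_prod, Fintype.card_fin, Nat.cast_mul] at h
    rw [hσ2, pow_two (r : ℝ)]
    exact h
  · have h := (key (fun _ => 1) 0 measurable_const (by simp) (by simpa using hτ0_int)).2
    simpa [hτ0] using h
  · simp only [l2norm_sq] at hτ1 hτ1_int ⊢
    have hint : ∀ j, Integrable (fun p => (p.1 j * f p.1 p.2) ^ 2) (stdGaussianPair r) := fun j =>
      integrable_sq_of_sum Finset.univ (i := j)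
        (F := fun j (p : (Fin r → ℝ) × (Fin r → ℝ)) => p.1 j * f p.1 p.2)
        (fun j => (hm1 j).mul hfm) hτ1_int (Finset.mem_univ j)
    have hk : ∀ j, Integrable (fun ω => (A ω j * y ω) ^ 2) μ ∧
        ∫ ω, (A ω j * y ω) ^ 2 ∂μ
          ≤ σy2 + ∫ p, (p.1 j * f p.1 p.2) ^ 2 ∂(stdGaussianPair r) := by
      intro j
      have h := key (fun p => p.1 j) 0 (hm1 j) (stdGaussPair_fst r j).1 (by simpa using hint j)
      rw [(stdGaussPair_fst r j).2, mul_one] at h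
      simpa only [sub_zero] using h
    have h := integral_sum_le hk hint
    rw [Fintype.card_fin] at h
    rw [hτ1]
    exact h
  · simp only [l2norm_sq] at hτ2 hτ2_int ⊢
    have hint : ∀ k, Integrable (fun p => (p.2 k * f p.1 p.2) ^ 2) (stdGaussianPair r) := fun k =>
      integrable_sq_of_sum Finset.univ (i := k)
        (F := fun k (p : (Fin r → ℝ) × (Fin r → ℝ)) => p.2 k * f p.1 p.2)
        (fun k => (hm2 k).mul hfm) hτ2_int (Finset.mem_univ k)
    have hk : ∀ k, Integrable (fun ω => (B ω k * y ω) ^ 2) μ ∧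
        ∫ ω, (B ω k * y ω) ^ 2 ∂μ
          ≤ σy2 + ∫ p, (p.2 k * f p.1 p.2) ^ 2 ∂(stdGaussianPair r) := by
      intro k
      have h := key (fun p => p.2 k) 0 (hm2 k) (stdGaussPair_snd r k).1 (by simpa using hint k)
      rw [(stdGaussPair_snd r k).2, mul_one] at h
      simpa only [sub_zero] using h
    have h := integral_sum_le hk hint
    rw [Fintype.card_fin] at h
    rw [hτ2]
    exact h

/-- Lemma 3 of the paper: moment identities/bounds for a single sample `(a, b, y)` of the model.
Writing `ā = Uᵀ a`, `b̄ = Vᵀ b`, one has `E[ā y b̄ᵀ] = Q`,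
`E‖ā y b̄ᵀ − Q‖_F² ≤ r² σ²_{y|a,b} + σ²`, `E[|y|²] ≤ σ²_{y|a,b} + τ0²`,
`E‖ā y‖₂² ≤ r σ²_{y|a,b} + τ1²`, and `E‖b̄ y‖₂² ≤ r σ²_{y|a,b} + τ2²`. -/
theorem stmt2 {Ω : Type*} [MeasurableSpace Ω] [StandardBorelSpace Ω] [Nonempty Ω]
    (μ : Measure Ω) [IsProbabilityMeasure μ]
    {n1 n2 r : ℕ} (hr1 : r ≤ n1) (hr2 : r ≤ n2)
    (U : Matrix (Fin n1) (Fin r) ℝ) (hU : Uᵀ * U = 1)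
    (V : Matrix (Fin n2) (Fin r) ℝ) (hV : Vᵀ * V = 1)
    (a : Ω → Fin n1 → ℝ) (b : Ω → Fin n2 → ℝ) (y : Ω → ℝ)
    (ha : Measurable a) (hb : Measurable b) (hy : Measurable y)
    (ha_law : μ.map a = stdGaussian n1) (hb_law : μ.map b = stdGaussian n2)
    (hab : IndepFun a b μ)
    (f : (Fin r → ℝ) → (Fin r → ℝ) → ℝ) (hf : Measurable (Function.uncurry f))
    -- the Markov chain: `y` is conditionally independent of `(a, b)` given `(Uᵀ a, Vᵀ b)`
    (hg : Measurable fun ω => (Uᵀ *ᵥ a ω, Vᵀ *ᵥ b ω))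
    (h_markov : CondIndepFun
      (MeasurableSpace.comap (fun ω => (Uᵀ *ᵥ a ω, Vᵀ *ᵥ b ω)) inferInstance)
      hg.comap_le y (fun ω => (a ω, b ω)) μ)
    -- conditional mean: `E[y | a, b] = f(Uᵀ a, Vᵀ b)`
    (hy_int : Integrable y μ)
    (hmean : μ[y | MeasurableSpace.comap (fun ω => (a ω, b ω)) inferInstance]
      =ᵐ[μ] fun ω => f (Uᵀ *ᵥ a ω) (Vᵀ *ᵥ b ω))
    -- conditional variance bound: `Var[y | a, b] ≤ σ²_{y|a,b}`
    (σy2 : ℝ) (hσy2 : 0 ≤ σy2)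
    (hvar_int : Integrable (fun ω => (y ω - f (Uᵀ *ᵥ a ω) (Vᵀ *ᵥ b ω)) ^ 2) μ)
    (hvar : ∀ᵐ ω ∂μ,
      (μ[(fun ω' => (y ω' - f (Uᵀ *ᵥ a ω') (Vᵀ *ᵥ b ω')) ^ 2) |
        MeasurableSpace.comap (fun ω => (a ω, b ω)) inferInstance]) ω ≤ σy2)
    -- the model constants `Q, σ², τ0², τ1², τ2²`, all assumed finite
    (Q : Matrix (Fin r) (Fin r) ℝ)
    (hQ : ∀ j k, Q j k = ∫ p, p.1 j * f p.1 p.2 * p.2 k ∂(stdGaussianPair r))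
    (hQ_int : ∀ j k, Integrable (fun p => p.1 j * f p.1 p.2 * p.2 k) (stdGaussianPair r))
    (σ2 τ0sq τ1sq τ2sq : ℝ)
    (hσ2 : σ2 = ∫ p,
      frobNorm ((Matrix.of fun j k => p.1 j * f p.1 p.2 * p.2 k) - Q) ^ 2 ∂(stdGaussianPair r))
    (hσ2_int : Integrable
      (fun p => frobNorm ((Matrix.of fun j k => p.1 j * f p.1 p.2 * p.2 k) - Q) ^ 2)
      (stdGaussianPair r))
    (hτ0 : τ0sq = ∫ p, (f p.1 p.2) ^ 2 ∂(stdGaussianPair r))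
    (hτ0_int : Integrable (fun p => (f p.1 p.2) ^ 2) (stdGaussianPair r))
    (hτ1 : τ1sq = ∫ p, l2norm (fun j => p.1 j * f p.1 p.2) ^ 2 ∂(stdGaussianPair r))
    (hτ1_int : Integrable (fun p => l2norm (fun j => p.1 j * f p.1 p.2) ^ 2) (stdGaussianPair r))
    (hτ2 : τ2sq = ∫ p, l2norm (fun k => p.2 k * f p.1 p.2) ^ 2 ∂(stdGaussianPair r))
    (hτ2_int : Integrable (fun p => l2norm (fun k => p.2 k * f p.1 p.2) ^ 2) (stdGaussianPair r)) :
    (∀ j k, ∫ ω, (Uᵀ *ᵥ a ω) j * y ω * (Vᵀ *ᵥ b ω) k ∂μ = Q j k) ∧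
    (∫ ω, frobNorm ((Matrix.of fun j k => (Uᵀ *ᵥ a ω) j * y ω * (Vᵀ *ᵥ b ω) k) - Q) ^ 2 ∂μ
      ≤ (r : ℝ) ^ 2 * σy2 + σ2) ∧
    (∫ ω, (y ω) ^ 2 ∂μ ≤ σy2 + τ0sq) ∧
    (∫ ω, l2norm (fun j => (Uᵀ *ᵥ a ω) j * y ω) ^ 2 ∂μ ≤ (r : ℝ) * σy2 + τ1sq) ∧
    (∫ ω, l2norm (fun k => (Vᵀ *ᵥ b ω) k * y ω) ^ 2 ∂μ ≤ (r : ℝ) * σy2 + τ2sq) := by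
  have hUm : Measurable fun x : Fin n1 → ℝ => Uᵀ *ᵥ x := by fun_prop
  have hVm : Measurable fun x : Fin n2 → ℝ => Vᵀ *ᵥ x := by fun_prop
  have hlaw : μ.map (fun ω => (Uᵀ *ᵥ a ω, Vᵀ *ᵥ b ω)) = stdGaussianPair r := by
    have hind := (hab.comp hUm hVm).map_prod_eq_prod_map_map
      (hUm.comp ha).aemeasurable (hVm.comp hb).aemeasurable
    rw [← Measure.map_map hUm ha, ← Measure.map_map hVm hb, ha_law, hb_law, map_stdGauss U hU,
      map_stdGauss V hV] at hind
    exact hind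
  have hpair : Measurable fun p : (Fin n1 → ℝ) × (Fin n2 → ℝ) => (Uᵀ *ᵥ p.1, Vᵀ *ᵥ p.2) :=
    (hUm.comp measurable_fst).prodMk (hVm.comp measurable_snd)
  exact moments_of_gaussian_pair (ha.prodMk hb).comap_le _ _ y hy
    (hpair.comp (comap_measurable fun ω => (a ω, b ω))) ⟨hg, hlaw⟩ f hf hy_int hmean σy2 hσy2
    hvar_int hvar Q hQ hQ_int σ2 τ0sq τ1sq τ2sq hσ2 hσ2_int hτ0 hτ0_int hτ1 hτ1_int hτ2 hτ2_int
end

section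
/- Let u ~ N(0, I_n) be a standard Gaussian vector in R^n, let P ∈ R^{n×n} be an orthogonal projection matrix (P = P^T = P²), and let ũ = P w where w ~ N(0, I_n) (so ũ is a centered Gaussian vector with covariance P). Then for every convex function g : R^n → R such that g(u) and g(ũ) are integrable, E[g(ũ)] ≤ E[g(u)]. -/
/-!
With `R = 2P - I`, the reflection through the range of `P`, one has `P u = (u + R u) / 2`, so
convexity gives `g (P u) ≤ (g u + g (R u)) / 2` pointwise. Since `R` is orthogonal, `R u` has the
same distribution as `u` (`measurePreserving_mulVec_stdGaussian`), and taking expectations gives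
the claim.
-/

open MeasureTheory ProbabilityTheory Matrix

/-- The standard Gaussian is invariant under orthogonal matrices. This is deduced from the
invariance of the Gaussian of `EuclideanSpace ℝ (Fin n)` under linear isometries. -/
theorem measurePreserving_mulVec_stdGaussian {n : ℕ} (R : Matrix (Fin n) (Fin n) ℝ)
    (hR : Rᵀ * R = 1) :
    MeasurePreserving (fun u => R *ᵥ u) (stdGaussian n) (stdGaussian n) := by
  have hmeas : Measurable fun u : Fin n → ℝ => R *ᵥ u := by fun_prop
  refine ⟨hmeas, ?_⟩
  have hdot (x : Fin n → ℝ) : (R *ᵥ x) ⬝ᵥ (R *ᵥ x) = x ⬝ᵥ x := by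
    rw [dotProduct_mulVec, vecMul_mulVec, ← dotProduct_mulVec, hR, one_mulVec]
  let f : EuclideanSpace ℝ (Fin n) →ₗᵢ[ℝ] EuclideanSpace ℝ (Fin n) :=
    { toLinearMap := R.toEuclideanLin
      norm_map' := fun x => by
        rw [EuclideanSpace.norm_eq, EuclideanSpace.norm_eq]
        congr 1
        have h := hdot x.ofLp
        simp only [dotProduct] at h
        simpa [pow_two] using h }
  have hpres := stdGaussian_map (f.toLinearIsometryEquiv rfl)
  rw [← map_pi_eq_stdGaussian, Measure.map_map (by fun_prop) (by fun_prop)] at hpres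
  apply (MeasurableEquiv.toLp 2 (Fin n → ℝ)).map_measurableEquiv_injective
  change Measure.map (WithLp.toLp 2) _ = Measure.map (WithLp.toLp 2) _
  rw [Measure.map_map (by fun_prop) hmeas]
  exact hpres

/-- Lemma 10 of the paper: if `u ~ N(0, I_n)`, `P` is an orthogonal projection matrix, and
`ũ = P w` with `w ~ N(0, I_n)` (a centered degenerate Gaussian with covariance `P`), then for
every convex integrable function `g`, `E[g(ũ)] ≤ E[g(u)]`. -/
theorem stmt11 {n : ℕ} (P : Matrix (Fin n) (Fin n) ℝ) (hsymm : Pᵀ = P) (hidem : P * P = P)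
    (g : (Fin n → ℝ) → ℝ) (hg : ConvexOn ℝ Set.univ g)
    (hint_u : Integrable g (stdGaussian n))
    (hint_pu : Integrable (fun w => g (P *ᵥ w)) (stdGaussian n)) :
    ∫ w, g (P *ᵥ w) ∂(stdGaussian n) ≤ ∫ u, g u ∂(stdGaussian n) := by
  have hR : (2 • P - 1)ᵀ * (2 • P - 1) = 1 := by
    simp only [transpose_sub, transpose_smul, transpose_one, hsymm, sub_mul, mul_sub, smul_mul_assoc,
      mul_smul_comm, hidem, mul_one, one_mul]
    abel
  have hpres := measurePreserving_mulVec_stdGaussian _ hR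
  have hint_R : Integrable (fun u => g ((2 • P - 1) *ᵥ u)) (stdGaussian n) :=
    hpres.integrable_comp_of_integrable hint_u
  -- The change of variables needs no measurable embedding, only a.e. strong measurability of `g`.
  have heq : ∫ u, g ((2 • P - 1) *ᵥ u) ∂(stdGaussian n) = ∫ u, g u ∂(stdGaussian n) := by
    have h := integral_map hpres.aemeasurable
      (hpres.map_eq.symm ▸ hint_u.aestronglyMeasurable : AEStronglyMeasurable g _)
    rw [hpres.map_eq] at h
    exact h.symm
  have hmid (u : Fin n → ℝ) :
      g (P *ᵥ u) ≤ (1 / 2) * g u + (1 / 2) * g ((2 • P - 1) *ᵥ u) := by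
    have h := hg.2 (Set.mem_univ u) (Set.mem_univ ((2 • P - 1) *ᵥ u))
      (by norm_num : (0 : ℝ) ≤ 1 / 2) (by norm_num : (0 : ℝ) ≤ 1 / 2) (by norm_num)
    have hu : (1 / 2 : ℝ) • u + (1 / 2 : ℝ) • ((2 • P - 1) *ᵥ u) = P *ᵥ u := by
      rw [sub_mulVec, one_mulVec, smul_mulVec]
      module
    rwa [hu] at h
  calc ∫ w, g (P *ᵥ w) ∂(stdGaussian n)
      ≤ ∫ u, ((1 / 2) * g u + (1 / 2) * g ((2 • P - 1) *ᵥ u)) ∂(stdGaussian n) :=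
        integral_mono hint_pu ((hint_u.const_mul _).add (hint_R.const_mul _)) hmid
    _ = ∫ u, g u ∂(stdGaussian n) := by
        rw [integral_add (hint_u.const_mul _) (hint_R.const_mul _), integral_const_mul,
          integral_const_mul, heq]
        ring
end
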